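/- Let u₁, u₂ be real numbers with |u₁| < 1 and |u₂| < 1. Define v₁ = u₁/√(1 − u₁²), v₂ = u₂/√(1 − u₂²), and v₃ = v₁ + v₂/√(1 − u₁²). Then 1 + 2·u₁·u₂·√(1 − u₂²) > 0 and v₃/√(1 + v₃²) = (u₁·√(1 − u₂²) + u₂)/√(1 + 2·u₁·u₂·√(1 − u₂²)). -/

import Mathlib

/-!
With `s = √(1 - u₁ ^ 2)` and `t = √(1 - u₂ ^ 2)`, the Hubble velocity `v₃` is the ratio `a / b` of
`a = u₁ * t + u₂` and `b = t * s > 0`. The map `v ↦ v / √(1 + v ^ 2)` is the sine as a function of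
the tangent, so it sends `a / b` to `a / √(b ^ 2 + a ^ 2)`, and the relations
`s ^ 2 + u₁ ^ 2 = 1 = t ^ 2 + u₂ ^ 2` reduce `b ^ 2 + a ^ 2` to `1 + 2 * u₁ * u₂ * t`.
-/

theorem sqrt_one_sub_sq_pos {u : ℝ} (hu : |u| < 1) : 0 < √(1 - u ^ 2) :=
  Real.sqrt_pos.2 (sub_pos.2 ((sq_lt_one_iff_abs_lt_one u).2 hu))

theorem sq_sqrt_one_sub_sq_add_sq {u : ℝ} (hu : |u| ≤ 1) : √(1 - u ^ 2) ^ 2 + u ^ 2 = 1 := by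
  rw [Real.sq_sqrt (sub_nonneg.2 ((sq_le_one_iff_abs_le_one u).2 hu)), sub_add_cancel]

theorem div_div_sqrt_one_add_div_sq (a : ℝ) {b : ℝ} (hb : 0 < b) :
    a / b / √(1 + (a / b) ^ 2) = a / √(b ^ 2 + a ^ 2) := by
  have hsqrt : √(1 + (a / b) ^ 2) = √(b ^ 2 + a ^ 2) / b := by
    rw [div_pow, one_add_div (pow_ne_zero 2 hb.ne'), Real.sqrt_div' _ (sq_nonneg b),
      Real.sqrt_sq hb.le]
  rw [hsqrt, div_div_div_cancel_right₀ hb.ne']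

theorem mul_sq_add_mul_add_sq_of_sq_add_sq_eq_one {R : Type*} [CommSemiring R] {s t u v : R}
    (hsu : s ^ 2 + u ^ 2 = 1) (htv : t ^ 2 + v ^ 2 = 1) :
    (t * s) ^ 2 + (u * t + v) ^ 2 = 1 + 2 * u * v * t :=
  calc
    (t * s) ^ 2 + (u * t + v) ^ 2 = t ^ 2 * (s ^ 2 + u ^ 2) + v ^ 2 + 2 * u * v * t := by ring
    _ = 1 + 2 * u * v * t := by rw [hsu, mul_one, htv]

theorem deSitter_kinematic_addition_fig1
    (u₁ u₂ : ℝ) (h₁ : |u₁| < 1) (h₂ : |u₂| < 1)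
    (v₁ v₂ v₃ : ℝ)
    (hv₁ : v₁ = u₁ / Real.sqrt (1 - u₁ ^ 2))
    (hv₂ : v₂ = u₂ / Real.sqrt (1 - u₂ ^ 2))
    (hv₃ : v₃ = v₁ + v₂ / Real.sqrt (1 - u₁ ^ 2)) :
    0 < 1 + 2 * u₁ * u₂ * Real.sqrt (1 - u₂ ^ 2) ∧
    v₃ / Real.sqrt (1 + v₃ ^ 2) =
      (u₁ * Real.sqrt (1 - u₂ ^ 2) + u₂) /
        Real.sqrt (1 + 2 * u₁ * u₂ * Real.sqrt (1 - u₂ ^ 2)) := by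
  have ht : 0 < √(1 - u₂ ^ 2) := sqrt_one_sub_sq_pos h₂
  have hts : 0 < √(1 - u₂ ^ 2) * √(1 - u₁ ^ 2) := mul_pos ht (sqrt_one_sub_sq_pos h₁)
  have hv₃_ratio : v₃ = (u₁ * √(1 - u₂ ^ 2) + u₂) / (√(1 - u₂ ^ 2) * √(1 - u₁ ^ 2)) := by
    rw [hv₃, hv₁, hv₂, ← add_div, add_div' _ _ _ ht.ne', div_div]
  rw [← mul_sq_add_mul_add_sq_of_sq_add_sq_eq_one (sq_sqrt_one_sub_sq_add_sq h₁.le)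
    (sq_sqrt_one_sub_sq_add_sq h₂.le), hv₃_ratio]
  exact ⟨add_pos_of_pos_of_nonneg (pow_pos hts 2) (sq_nonneg _), div_div_sqrt_one_add_div_sq _ hts⟩
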